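/- Let r ≥ 5 be a rational prime, K a totally real number field, K⁺ := K(ζ_r + ζ_r⁻¹), and p a rational prime. Let (x, y, z) ∈ 𝒪_{K⁺}³ be a nontrivial primitive solution of x^r + y^r = z^p, and let A, B, C ∈ 𝒪_{K⁺} be as in the Frey construction. Set Δ := 2⁴·(ABC)² and c₄ := −2⁴·(AB + BC + CA) (the discriminant and c₄-invariant of the Weierstrass model Y² = X(X−A)(X+B)). Then for every nonzero prime ideal 𝔭 of 𝒪_{K⁺} lying above neither 2 nor r: p divides v_𝔭(Δ); and if 𝔭 ∣ ABC then v_𝔭(c₄) = 0. -/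

import Mathlib

open NumberField IsDedekindDomain IntermediateField
open scoped Classical

/-- The additive `v`-adic valuation of a nonzero element of the fraction field,
normalized so that a uniformizer has valuation `1` (junk value `0` at `x = 0`). -/
noncomputable def addVal {R : Type*} [CommRing R] [IsDedekindDomain R]
    {F : Type*} [Field F] [Algebra R F] [IsFractionRing R F]
    (v : HeightOneSpectrum R) (x : F) : ℤ :=
  if hx : x = 0 then 0
  else -Multiplicative.toAdd (WithZero.unzero ((v.valuation F).ne_zero_iff.mpr hx))


section FreyHelpers

variable {R : Type*} [CommRing R] [IsDedekindDomain R]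
    {F : Type*} [Field F] [Algebra R F] [IsFractionRing R F]

lemma addVal_spec (v : HeightOneSpectrum R) {x : F} (hx : x ≠ 0) :
    v.valuation F x = WithZero.exp (-addVal v x) := by
  unfold addVal
  rw [dif_neg hx, neg_neg]
  exact (WithZero.coe_unzero _).symm

lemma addVal_eq_of (v : HeightOneSpectrum R) {x : F} {n : ℤ}
    (h : v.valuation F x = WithZero.exp (-n)) : addVal v x = n := by
  have hx : x ≠ 0 := by
    rintro rfl
    rw [map_zero] at h
    exact WithZero.exp_ne_zero h.symm
  rw [addVal_spec v hx] at h
  have := WithZero.exp_injective h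
  omega

lemma addVal_mul' (v : HeightOneSpectrum R) {x y : F} (hx : x ≠ 0) (hy : y ≠ 0) :
    addVal v (x * y) = addVal v x + addVal v y := by
  apply addVal_eq_of
  rw [map_mul, addVal_spec v hx, addVal_spec v hy, ← WithZero.exp_add]
  congr 1; ring

lemma addVal_pow' (v : HeightOneSpectrum R) {x : F} (hx : x ≠ 0) (n : ℕ) :
    addVal v (x ^ n) = n * addVal v x := by
  apply addVal_eq_of
  rw [map_pow, addVal_spec v hx, ← WithZero.exp_nsmul]
  congr 1; simp

lemma addVal_eq_zero' (v : HeightOneSpectrum R) {x : R} (hx : x ∉ v.asIdeal) :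
    addVal v (algebraMap R F x) = 0 := by
  apply addVal_eq_of
  rw [neg_zero, WithZero.exp_zero, HeightOneSpectrum.valuation_of_algebraMap]
  exact HeightOneSpectrum.intValuation_eq_one_iff.mpr hx

/-- If `u * G = z ^ p` with `u ∈ 𝔭 → G ∉ 𝔭` then `p ∣ v(u)`. -/
lemma dvd_addVal (v : HeightOneSpectrum R) {u G z : R} {p : ℕ} (h : u * G = z ^ p) (hz : z ≠ 0)
    (hG : u ∈ v.asIdeal → G ∉ v.asIdeal) : (p : ℤ) ∣ addVal v (algebraMap R F u) := by
  by_cases hu : u ∈ v.asIdeal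
  · have inj := IsFractionRing.injective R F
    have hzp : u * G ≠ 0 := by rw [h]; exact pow_ne_zero _ hz
    have e := congrArg (fun t => addVal v (algebraMap R F t)) h
    simp only [map_mul, map_pow] at e
    rw [addVal_mul' v, addVal_pow' v, addVal_eq_zero' v (hG hu), add_zero] at e
    · exact ⟨_, e⟩
    · exact (map_ne_zero_iff _ inj).mpr hz
    · exact (map_ne_zero_iff _ inj).mpr (left_ne_zero_of_mul hzp)
    · exact (map_ne_zero_iff _ inj).mpr (right_ne_zero_of_mul hzp)
  · rw [addVal_eq_zero' v hu]; exact dvd_zero _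

lemma telescoping {L : Type*} [CommRing L] (w : L) (n : ℕ) :
    (w - 1) * ∑ s ∈ Finset.range n, (s : L) * w ^ s + w * ∑ s ∈ Finset.range n, w ^ s
      = n * w ^ n := by
  induction n with
  | zero => simp
  | succ n ih =>
    rw [Finset.sum_range_succ, Finset.sum_range_succ, Nat.cast_succ, pow_succ]
    linear_combination ih

lemma sub_one_dvd {L : Type*} [Field L] {w : L} {r : ℕ} (hr : 1 < r)
    (hw : IsPrimitiveRoot w r) : ∃ d : L, IsIntegral ℤ d ∧ (w - 1) * d = r := by
  refine ⟨∑ s ∈ Finset.range r, (s : L) * w ^ s, ?_, ?_⟩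
  · refine IsIntegral.sum _ fun s _ => ?_
    refine IsIntegral.mul ?_ ((hw.isIntegral (by omega)).pow s)
    exact_mod_cast isIntegral_algebraMap (R := ℤ) (A := L) (x := (s : ℤ))
  · have := telescoping w r
    rw [hw.geom_sum_eq_zero hr, hw.pow_eq_one] at this
    simpa using this

lemma diff_dvd {L : Type*} [Field L] {ζ : L} {r : ℕ} (hr : r.Prime) (hζ : IsPrimitiveRoot ζ r)
    {i j : ℕ} (hij : i < j) (hj : 2 * j < r) :
    ∃ d : L, IsIntegral ℤ d ∧ ((ζ ^ i + ζ⁻¹ ^ i) - (ζ ^ j + ζ⁻¹ ^ j)) * d = (r : L) ^ 2 := by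
  have h0 : ζ ≠ 0 := hζ.ne_zero hr.ne_zero
  have cop : ∀ n, 0 < n → n < r → IsPrimitiveRoot (ζ ^ n) r := fun n h1 h2 =>
    hζ.pow_of_coprime n (Nat.Coprime.symm ((Nat.Prime.coprime_iff_not_dvd hr).mpr (Nat.not_dvd_of_pos_of_lt h1 h2)))
  obtain ⟨d, hd, e⟩ := sub_one_dvd hr.one_lt (cop (i + j) (by omega) (by omega))
  obtain ⟨d', hd', e'⟩ := sub_one_dvd hr.one_lt (cop (j - i) (by omega) (by omega))
  refine ⟨-(ζ ^ j * d * d'), ?_, ?_⟩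
  · exact ((((hζ.isIntegral hr.pos).pow j).mul hd).mul hd').neg
  · obtain ⟨k, rfl⟩ := Nat.exists_eq_add_of_lt hij
    have : i + k + 1 - i = k + 1 := by omega
    rw [this] at e'
    rw [sq]
    nth_rewrite 1 [← e]
    rw [← e']
    have key : ((ζ ^ i + ζ⁻¹ ^ i) - (ζ ^ (i + k + 1) + ζ⁻¹ ^ (i + k + 1))) * ζ ^ (i + k + 1)
        = -((ζ ^ (i + (i + k + 1)) - 1) * (ζ ^ (k + 1) - 1)) := by
      simp only [inv_pow]
      field_simp
      ring
    linear_combination (-d * d') * key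

lemma factor {L : Type*} [Field L] {ζ : L} {m : ℕ}
    (hζ : IsPrimitiveRoot ζ (2 * m + 1)) (x y : L) :
    x ^ (2 * m + 1) + y ^ (2 * m + 1) =
      (∏ j ∈ Finset.range m, (x ^ 2 + (ζ ^ (j + 1) + ζ⁻¹ ^ (j + 1)) * x * y + y ^ 2)) *
        (x + y) := by
  have h0 : ζ ≠ 0 := hζ.ne_zero (by omega)
  have e1 : Polynomial.nthRootsFinset (2 * m + 1) (1 : L) =
      (Finset.range (2 * m + 1)).image (fun j => ζ ^ j) := by
    symm
    apply Finset.eq_of_subset_of_card_le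
    · intro w hw
      obtain ⟨j, -, rfl⟩ := Finset.mem_image.mp hw
      rw [Polynomial.mem_nthRootsFinset (by omega), ← pow_mul, mul_comm, pow_mul, hζ.pow_eq_one,
        one_pow]
    · rw [hζ.card_nthRootsFinset, Finset.card_image_of_injOn, Finset.card_range]
      intro i hi j hj h
      exact hζ.pow_inj (by simpa using hi) (by simpa using hj) h
  rw [hζ.pow_add_pow_eq_prod_add_mul x y ⟨m, rfl⟩, e1, Finset.prod_image]
  swap
  · intro i hi j hj h
    exact hζ.pow_inj (by simpa using hi) (by simpa using hj) h
  rw [Finset.prod_range_succ', pow_zero, one_mul, two_mul, Finset.prod_range_add]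
  congr 1
  rw [← Finset.prod_range_reflect (fun j => x + ζ ^ (m + j + 1) * y) m, ← Finset.prod_mul_distrib]
  refine Finset.prod_congr rfl fun j hj => ?_
  have hj' : j < m := Finset.mem_range.mp hj
  have e2 : ζ ^ (m + (m - 1 - j) + 1) = ζ⁻¹ ^ (j + 1) := by
    rw [inv_pow]
    apply eq_inv_of_mul_eq_one_left
    rw [← pow_add, ← hζ.pow_eq_one]
    congr 1
    omega
  have e3 : ζ ^ (j + 1) * ζ⁻¹ ^ (j + 1) = 1 := by
    rw [← mul_pow, mul_inv_cancel₀ h0, one_pow]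
  rw [e2]
  linear_combination y ^ 2 * e3

end FreyHelpers

theorem frey_curve_minimal_discriminant_outside_2r
    (r : ℕ) (hr : r.Prime) (hr5 : 5 ≤ r)
    (K : Type) [Field K] [NumberField K]
    (hTR : ∀ v : InfinitePlace K, v.IsReal)
    (ζ : AlgebraicClosure K) (hζ : IsPrimitiveRoot ζ r)
    (Kp : IntermediateField K (AlgebraicClosure K)) [NumberField Kp]
    (hKp : Kp = K⟮ζ + ζ⁻¹⟯)
    -- `a k` is `ζ_r^k + ζ_r^{-k}` as an element of `𝒪_{K⁺}`
    (a : ℕ → 𝓞 Kp) (ha : ∀ k, ((a k : Kp) : AlgebraicClosure K) = ζ ^ k + ζ⁻¹ ^ k)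
    (p : ℕ) (hp : p.Prime)
    (x y z : 𝓞 Kp) (hsol : x ^ r + y ^ r = z ^ p)
    (hnt : x * y * z ≠ 0)
    (hxy : IsCoprime x y) (hyz : IsCoprime y z) (hxz : IsCoprime x z)
    (k₁ k₂ k₃ : ℕ)
    (hk₁ : k₁ ≤ (r - 1) / 2) (hk₂ : k₂ ≤ (r - 1) / 2) (hk₃ : k₃ ≤ (r - 1) / 2)
    (hk12 : k₁ ≠ k₂) (hk23 : k₂ ≠ k₃) (hk13 : k₁ ≠ k₃)
    -- the Frey construction
    (A B C : 𝓞 Kp)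
    (hA : A = (a k₃ - a k₂) * (x ^ 2 + a k₁ * x * y + y ^ 2))
    (hB : B = (a k₁ - a k₃) * (x ^ 2 + a k₂ * x * y + y ^ 2))
    (hC : C = (a k₂ - a k₁) * (x ^ 2 + a k₃ * x * y + y ^ 2))
    -- discriminant and `c₄`-invariant of `Y² = X(X−A)(X+B)`
    (Δ c₄ : 𝓞 Kp)
    (hΔ : Δ = 2 ^ 4 * (A * B * C) ^ 2)
    (hc₄ : c₄ = -(2 ^ 4 * (A * B + B * C + C * A))) :
    ∀ 𝔭 : HeightOneSpectrum (𝓞 Kp),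
      (2 : 𝓞 Kp) ∉ 𝔭.asIdeal → (r : 𝓞 Kp) ∉ 𝔭.asIdeal →
      (p : ℤ) ∣ addVal 𝔭 ((Δ : Kp)) ∧
      (A * B * C ∈ 𝔭.asIdeal → addVal 𝔭 ((c₄ : Kp)) = 0) := by
  intro 𝔭 h2 hrp
  have hprime := 𝔭.isPrime
  obtain ⟨m, rfl⟩ : ∃ m, r = 2 * m + 1 := hr.odd_of_ne_two (by omega)
  have hm : (2 * m + 1 - 1) / 2 = m := by omega
  rw [hm] at hk₁ hk₂ hk₃
  have inj : Function.Injective (fun t : 𝓞 Kp => ((t : Kp) : AlgebraicClosure K)) :=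
    fun s t h => RingOfIntegers.coe_injective (Subtype.coe_injective h)
  -- differences of the `a k` are units at `𝔭`
  have hdiff' : ∀ i j, i < j → j ≤ m → a i - a j ∉ 𝔭.asIdeal := by
    intro i j hij hj hmem
    obtain ⟨d, hd, e⟩ := diff_dvd hr hζ hij (by omega)
    rw [← ha, ← ha] at e
    have hne : ((a i : Kp) - (a j : Kp)) ≠ 0 := by
      intro h0
      have h1 := congrArg (fun t : Kp => (t : AlgebraicClosure K)) h0
      simp only [AddSubgroupClass.coe_sub, ZeroMemClass.coe_zero] at h1
      rw [h1, zero_mul] at e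
      have : ((2 * m + 1 : ℕ) : AlgebraicClosure K) ≠ 0 := Nat.cast_ne_zero.mpr (by omega)
      exact pow_ne_zero 2 this e.symm
    have hne' : ((a i : Kp) : AlgebraicClosure K) - ((a j : Kp) : AlgebraicClosure K) ≠ 0 := by
      intro h
      apply hne
      apply Subtype.coe_injective
      simpa using h
    have hdK : (((((2 * m + 1 : ℕ) : Kp) ^ 2 / ((a i : Kp) - (a j : Kp)) : Kp)) :
        AlgebraicClosure K) = d := by
      push_cast
      rw [div_eq_iff hne', mul_comm d, e]
      push_cast
      rfl
    have hint : IsIntegral ℤ (((2 * m + 1 : ℕ) : Kp) ^ 2 / ((a i : Kp) - (a j : Kp))) := by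
      rw [← isIntegral_algebraMap_iff (A := Kp) (B := AlgebraicClosure K)
        (FaithfulSMul.algebraMap_injective _ _)]
      change IsIntegral ℤ (((((2 * m + 1 : ℕ) : Kp) ^ 2 / ((a i : Kp) - (a j : Kp)) : Kp)) :
        AlgebraicClosure K)
      rw [hdK]; exact hd
    obtain ⟨c, hc⟩ : ∃ c : 𝓞 Kp, (c : Kp) =
        ((2 * m + 1 : ℕ) : Kp) ^ 2 / ((a i : Kp) - (a j : Kp)) := ⟨⟨_, hint⟩, rfl⟩
    have hfac : (a i - a j) * c = ((2 * m + 1 : ℕ) : 𝓞 Kp) ^ 2 := by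
      apply RingOfIntegers.coe_injective
      simp only [map_mul, map_sub, map_pow, map_natCast]
      change ((a i : Kp) - (a j : Kp)) * (c : Kp) = _
      rw [hc]
      exact mul_div_cancel₀ _ hne
    have := hfac ▸ 𝔭.asIdeal.mul_mem_right c hmem
    exact hrp (hprime.mem_of_pow_mem 2 this)
  have hdiff : ∀ i j, i ≠ j → i ≤ m → j ≤ m → a i - a j ∉ 𝔭.asIdeal := by
    intro i j hij hi hj
    rcases lt_or_gt_of_ne hij with h | h
    · exact hdiff' i j h hj
    · rw [← neg_sub, Ideal.neg_mem_iff]; exact hdiff' j i h hi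
  set f : ℕ → 𝓞 Kp := fun k => x ^ 2 + a k * x * y + y ^ 2 with hf
  have hcop : ∀ i j, i ≠ j → i ≤ m → j ≤ m → f i ∈ 𝔭.asIdeal → f j ∉ 𝔭.asIdeal := by
    intro i j hij hi hj h1 h2
    have h3 : (a i - a j) * (x * y) ∈ 𝔭.asIdeal := by
      have := 𝔭.asIdeal.sub_mem h1 h2
      convert this using 1
      simp only [hf]; ring
    have h4 := (hprime.mem_or_mem h3).resolve_left (hdiff i j hij hi hj)
    have h5 : x ∈ 𝔭.asIdeal ∧ y ∈ 𝔭.asIdeal := by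
      rcases hprime.mem_or_mem h4 with h | h
      · refine ⟨h, hprime.mem_of_pow_mem 2 ?_⟩
        have := 𝔭.asIdeal.sub_mem h1 (𝔭.asIdeal.mul_mem_left (x + a i * y) h)
        convert this using 1
        simp only [hf]; ring
      · refine ⟨hprime.mem_of_pow_mem 2 ?_, h⟩
        have := 𝔭.asIdeal.sub_mem h1 (𝔭.asIdeal.mul_mem_left (y + a i * x) h)
        convert this using 1
        simp only [hf]; ring
    obtain ⟨s, t, hst⟩ := hxy
    apply hprime.ne_top
    rw [Ideal.eq_top_iff_one, ← hst]
    exact 𝔭.asIdeal.add_mem (𝔭.asIdeal.mul_mem_left _ h5.1) (𝔭.asIdeal.mul_mem_left _ h5.2)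
  have ha0 : a 0 = 2 := by
    apply inj
    simp only [ha, map_ofNat]
    norm_num
    rfl
  have hf0 : f 0 = (x + y) ^ 2 := by simp only [hf, ha0]; ring
  have hprod : (∏ j ∈ Finset.range m, f (j + 1)) * (x + y) = z ^ p := by
    rw [← hsol]
    apply inj
    have := factor hζ ((x : Kp) : AlgebraicClosure K) ((y : Kp) : AlgebraicClosure K)
    simp only [← ha] at this
    simp only [hf, map_mul, map_add, map_pow, map_prod]
    push_cast
    exact this.symm
  have hz : z ≠ 0 := right_ne_zero_of_mul hnt
  have hzp : z ^ p ≠ 0 := pow_ne_zero _ hz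
  have hxy0 : x + y ≠ 0 := by
    intro h; rw [h, mul_zero] at hprod; exact hzp hprod.symm
  have cinj := RingOfIntegers.coe_injective (K := Kp)
  have hfne : ∀ k, k ≤ m → f k ≠ 0 := by
    intro k hk h
    rcases k with _ | k
    · rw [hf0] at h; exact hxy0 (pow_eq_zero_iff (two_ne_zero) |>.mp h)
    · rw [Finset.prod_eq_zero (Finset.mem_range.mpr hk) h, zero_mul] at hprod
      exact hzp hprod.symm
  have hfdvd : ∀ k, k ≤ m → (p : ℤ) ∣ addVal 𝔭 (algebraMap (𝓞 Kp) Kp (f k)) := by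
    intro k hk
    rcases k with _ | k
    · rw [hf0, map_pow, addVal_pow' 𝔭 ((map_ne_zero_iff _ cinj).mpr hxy0)]
      apply Dvd.dvd.mul_left
      apply dvd_addVal 𝔭 (G := ∏ j ∈ Finset.range m, f (j + 1)) (z := z) _ hz
      · intro hu hG
        obtain ⟨j, hj, hj'⟩ := (hprime.prod_mem_iff).mp hG
        have := Finset.mem_range.mp hj
        refine hcop 0 (j + 1) (by omega) (by omega) (by omega) ?_ hj'
        rw [hf0]; exact Ideal.pow_mem_of_mem _ hu 2 (by omega)
      · rw [mul_comm]; exact hprod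
    · have hk' : k ∈ Finset.range m := Finset.mem_range.mpr hk
      apply dvd_addVal 𝔭
        (G := (∏ j ∈ (Finset.range m).erase k, f (j + 1)) * (x + y)) (z := z) _ hz
      · intro hu hG
        rcases hprime.mem_or_mem hG with hG | hG
        · obtain ⟨j, hj, hj'⟩ := (hprime.prod_mem_iff).mp hG
          obtain ⟨hj1, hj2⟩ := Finset.mem_erase.mp hj
          have := Finset.mem_range.mp hj2
          exact hcop (k + 1) (j + 1) (by omega) (by omega) (by omega) hu hj'
        · refine hcop (k + 1) 0 (by omega) (by omega) (by omega) hu ?_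
          rw [hf0]; exact Ideal.pow_mem_of_mem _ hG 2 (by omega)
      · rw [← mul_assoc, Finset.mul_prod_erase _ (fun j => f (j + 1)) hk']; exact hprod
  -- the three factors
  have hpart : ∀ u k, u ∉ 𝔭.asIdeal → k ≤ m → u * f k ≠ 0 ∧
      (p : ℤ) ∣ addVal 𝔭 (algebraMap (𝓞 Kp) Kp (u * f k)) := by
    intro u k hu hk
    have hu0 : u ≠ 0 := by rintro rfl; exact hu (zero_mem _)
    refine ⟨mul_ne_zero hu0 (hfne k hk), ?_⟩
    rw [map_mul, addVal_mul' 𝔭 ((map_ne_zero_iff _ cinj).mpr hu0)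
      ((map_ne_zero_iff _ cinj).mpr (hfne k hk)), addVal_eq_zero' 𝔭 hu, zero_add]
    exact hfdvd k hk
  have hα := hdiff k₃ k₂ hk23.symm hk₃ hk₂
  have hβ := hdiff k₁ k₃ hk13 hk₁ hk₃
  have hγ := hdiff k₂ k₁ hk12.symm hk₂ hk₁
  obtain ⟨hA0, hAp⟩ := hpart _ k₁ hα hk₁
  obtain ⟨hB0, hBp⟩ := hpart _ k₂ hβ hk₂
  obtain ⟨hC0, hCp⟩ := hpart _ k₃ hγ hk₃
  have hAB : A ∈ 𝔭.asIdeal → B ∉ 𝔭.asIdeal := by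
    rw [hA, hB]
    intro h h'
    exact hcop k₁ k₂ hk12 hk₁ hk₂ ((hprime.mem_or_mem h).resolve_left hα)
      ((hprime.mem_or_mem h').resolve_left hβ)
  have hAC : A ∈ 𝔭.asIdeal → C ∉ 𝔭.asIdeal := by
    rw [hA, hC]
    intro h h'
    exact hcop k₁ k₃ hk13 hk₁ hk₃ ((hprime.mem_or_mem h).resolve_left hα)
      ((hprime.mem_or_mem h').resolve_left hγ)
  have hBC : B ∈ 𝔭.asIdeal → C ∉ 𝔭.asIdeal := by
    rw [hB, hC]
    intro h h'
    exact hcop k₂ k₃ hk23 hk₂ hk₃ ((hprime.mem_or_mem h).resolve_left hβ)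
      ((hprime.mem_or_mem h').resolve_left hγ)
  have h16 : (2 : 𝓞 Kp) ^ 4 ∉ 𝔭.asIdeal := fun h => h2 (hprime.mem_of_pow_mem 4 h)
  constructor
  · change (p : ℤ) ∣ addVal 𝔭 (algebraMap (𝓞 Kp) Kp Δ)
    change A = _ * f k₁ at hA
    change B = _ * f k₂ at hB
    change C = _ * f k₃ at hC
    rw [← hA] at hA0 hAp
    rw [← hB] at hB0 hBp
    rw [← hC] at hC0 hCp
    have nz : ∀ t : 𝓞 Kp, t ≠ 0 → algebraMap (𝓞 Kp) Kp t ≠ 0 :=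
      fun t ht => (map_ne_zero_iff _ cinj).mpr ht
    have h160 : (2 : 𝓞 Kp) ^ 4 ≠ 0 := fun h => h16 (h ▸ zero_mem _)
    rw [hΔ, map_mul, addVal_mul' 𝔭 (nz _ h160) (nz _ (by positivity)), addVal_eq_zero' 𝔭 h16,
      zero_add, map_pow, addVal_pow' 𝔭 (nz _ (by positivity)), map_mul, map_mul,
      addVal_mul' 𝔭 (mul_ne_zero (nz _ hA0) (nz _ hB0)) (nz _ hC0),
      addVal_mul' 𝔭 (nz _ hA0) (nz _ hB0)]
    exact Dvd.dvd.mul_left (dvd_add (dvd_add hAp hBp) hCp) _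
  · intro hABC
    change addVal 𝔭 (algebraMap (𝓞 Kp) Kp c₄) = 0
    apply addVal_eq_zero'
    rw [hc₄, Ideal.neg_mem_iff]
    intro h
    have h' := (hprime.mem_or_mem h).resolve_left h16
    rcases hprime.mem_or_mem hABC with hh | hh
    · rcases hprime.mem_or_mem hh with hh | hh
      · have : B * C ∈ 𝔭.asIdeal := by
          have := 𝔭.asIdeal.sub_mem h' (𝔭.asIdeal.mul_mem_left (B + C) hh)
          convert this using 1
          ring
        rcases hprime.mem_or_mem this with h3 | h3
        · exact hAB hh h3
        · exact hAC hh h3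
      · have : A * C ∈ 𝔭.asIdeal := by
          have := 𝔭.asIdeal.sub_mem h' (𝔭.asIdeal.mul_mem_left (A + C) hh)
          convert this using 1
          ring
        rcases hprime.mem_or_mem this with h3 | h3
        · exact hAB h3 hh
        · exact hBC hh h3
    · have : A * B ∈ 𝔭.asIdeal := by
        have := 𝔭.asIdeal.sub_mem h' (𝔭.asIdeal.mul_mem_left (A + B) hh)
        convert this using 1
        ring
      rcases hprime.mem_or_mem this with h3 | h3
      · exact hAC h3 hh
      · exact hBC h3 hh
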